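/- Let S be an abelian discrete p-toral group and let f : S → S be a surjective group endomorphism. Then there exist unique subgroups T, U ≤ S such that S = T × U (internal direct product), f restricts to an automorphism of T, U is connected (i.e., U ≅ (ℤ/p^∞)^r for some r ≥ 0), and f restricts to a locally nilpotent endomorphism of U. -/

import Mathlib

/-- ℚ/ℤ as an additive group. -/
abbrev QmodZ : Type := ℚ ⧸ AddSubgroup.zmultiples (1 : ℚ)

/-- The Prüfer p-group ℤ/p^∞, realized as the p-primary component of ℚ/ℤ,
written multiplicatively. -/
def Prufer (p : ℕ) [Fact p.Prime] : Type :=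
  Multiplicative (AddCommGroup.primaryComponent QmodZ p)

instance (p : ℕ) [Fact p.Prime] : CommGroup (Prufer p) :=
  Multiplicative.commGroup

/-- A group `S` is *discrete p-toral* if it has a normal subgroup `S₀` isomorphic to a
finite direct product of copies of `ℤ/p^∞` such that `S/S₀` is a finite `p`-group. -/
def IsDiscretePToral (p : ℕ) [Fact p.Prime] (S : Type*) [Group S] : Prop :=
  ∃ S₀ : Subgroup S, ∃ _ : S₀.Normal,
    (∃ r : ℕ, Nonempty (S₀ ≃* (Fin r → Prufer p))) ∧
    Finite (S ⧸ S₀) ∧ IsPGroup p (S ⧸ S₀)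

/-!
The subgroup `T` consists of the periodic points of `f`, and `U` is the union of the kernels of the
iterates of `f`. A discrete `p`-toral group has finite `n`-torsion for every `n ≠ 0`, so all orbits
of `f` are finite; this makes `T` and `U` complementary, and any other decomposition is contained
in this one, hence equal to it.

The index of `S ^ p` is finite, so the surjection `f` induces a bijection of `S / S ^ p`, and the
elements killed by an iterate of `f` are `p`-th powers in `S`. As `U` is a direct factor, it is
`p`-divisible. A `p`-divisible abelian `p`-group `A` with finite `p`-torsion is a power of the
Prüfer group: since `ℚ/ℤ` is an injective abelian group, an isomorphism of the `p`-torsion of `A`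
with that of a power of the Prüfer group extends to `A`, and bijectivity of a homomorphism between
`p`-divisible `p`-groups can be tested on `p`-torsion.
-/

section PeriodicPoints

open Function

variable {α : Type*} {f : α → α} {x : α}

theorem exists_iterate_mem_periodicPts (hx : (Set.range (f^[·] x)).Finite) :
    ∃ n, f^[n] x ∈ periodicPts f := by
  obtain ⟨m, -, n, -, hmn, h⟩ := Set.infinite_univ.exists_lt_map_eq_of_mapsTo
    (f := fun k ↦ f^[k] x) (fun k _ ↦ Set.mem_range_self k) hx
  refine ⟨m, n - m, Nat.sub_pos_of_lt hmn, ?_⟩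
  rw [IsPeriodicPt, IsFixedPt, ← iterate_add_apply, Nat.sub_add_cancel hmn.le]
  exact h.symm

theorem mem_periodicPts_of_injOn {s : Set α} (hmaps : Set.MapsTo f s s) (hinj : Set.InjOn f s)
    (hxs : x ∈ s) (hx : (Set.range (f^[·] x)).Finite) : x ∈ periodicPts f := by
  obtain ⟨n, m, hm, hper⟩ := exists_iterate_mem_periodicPts hx
  refine ⟨m, hm, hinj.iterate hmaps n (hmaps.iterate m hxs) hxs ?_⟩
  rw [← iterate_add_apply, add_comm, iterate_add_apply]
  exact hper

end PeriodicPoints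

section Fitting

open Function

variable {G : Type*} [Group G] (f : G →* G)

/-- The subgroup of periodic points of a group endomorphism, the bijective part of its Fitting
decomposition. -/
def periodicSubgroup : Subgroup G where
  carrier := periodicPts f
  one_mem' := mk_mem_periodicPts one_pos (map_one f)
  mul_mem' := by
    rintro x y ⟨m, hm, hx⟩ ⟨n, hn, hy⟩
    refine ⟨m * n, Nat.mul_pos hm hn, ?_⟩
    rw [IsPeriodicPt, IsFixedPt, iterate_map_mul, (hx.mul_const n).eq, (hy.const_mul m).eq]
  inv_mem' := by
    rintro x ⟨m, hm, hx⟩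
    exact ⟨m, hm, by rw [IsPeriodicPt, IsFixedPt, iterate_map_inv, hx.eq]⟩

theorem bijOn_periodicSubgroup :
    Set.BijOn f (periodicSubgroup f : Set G) (periodicSubgroup f : Set G) :=
  bijOn_periodicPts f

variable {f}

theorem iterate_eq_one_of_le {m n : ℕ} (hmn : m ≤ n) {x : G} (hx : f^[m] x = 1) :
    f^[n] x = 1 := by
  rw [← Nat.sub_add_cancel hmn, iterate_add_apply, hx, iterate_map_one]

variable (f)

/-- The union of the kernels of the iterates of a group endomorphism, the locally nilpotent part of
its Fitting decomposition. -/
def iterateKer : Subgroup G where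
  carrier := {x | ∃ n, f^[n] x = 1}
  one_mem' := ⟨0, rfl⟩
  mul_mem' := by
    rintro x y ⟨m, hx⟩ ⟨n, hy⟩
    refine ⟨max m n, ?_⟩
    rw [iterate_map_mul, iterate_eq_one_of_le (le_max_left m n) hx,
      iterate_eq_one_of_le (le_max_right m n) hy, one_mul]
  inv_mem' := by
    rintro x ⟨m, hx⟩
    exact ⟨m, by rw [iterate_map_inv, hx, inv_one]⟩

theorem mapsTo_iterateKer : Set.MapsTo f (iterateKer f : Set G) (iterateKer f : Set G) := by
  rintro x ⟨n, hx⟩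
  exact ⟨n, by rw [← iterate_succ_apply, iterate_succ_apply', hx, map_one]⟩

theorem disjoint_periodicSubgroup_iterateKer :
    Disjoint (periodicSubgroup f) (iterateKer f) := by
  refine Subgroup.disjoint_def.mpr ?_
  rintro x ⟨m, hm, hx⟩ ⟨n, hy⟩
  rw [← (hx.mul_const n).eq]
  exact iterate_eq_one_of_le (Nat.le_mul_of_pos_left n hm) hy

variable {f}

theorem codisjoint_periodicSubgroup_iterateKer
    (hfin : ∀ x, (Set.range (f^[·] x)).Finite) :
    Codisjoint (periodicSubgroup f) (iterateKer f) := by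
  refine codisjoint_iff_le_sup.mpr fun x _ ↦ ?_
  obtain ⟨n, hn⟩ := exists_iterate_mem_periodicPts (hfin x)
  obtain ⟨t, ht, htx⟩ := (bijOn_periodicSubgroup f).surjOn.iterate n hn
  have hu : t⁻¹ * x ∈ iterateKer f :=
    ⟨n, by rw [iterate_map_mul, iterate_map_inv, htx, inv_mul_cancel]⟩
  simpa only [mul_inv_cancel_left] using Subgroup.mul_mem_sup ht hu

theorem isCompl_periodicSubgroup_iterateKer (hfin : ∀ x, (Set.range (f^[·] x)).Finite) :
    IsCompl (periodicSubgroup f) (iterateKer f) :=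
  ⟨disjoint_periodicSubgroup_iterateKer f, codisjoint_periodicSubgroup_iterateKer hfin⟩

theorem eq_periodicSubgroup_and_eq_iterateKer {A : Type*} [CommGroup A] {f : A →* A}
    (hfin : ∀ x, (Set.range (f^[·] x)).Finite) {T U : Subgroup A} (hTU : Codisjoint T U)
    (hT : Set.BijOn f (T : Set A) (T : Set A)) (hU : ∀ x ∈ U, ∃ n, f^[n] x = 1) :
    T = periodicSubgroup f ∧ U = iterateKer f := by
  have hT_le : T ≤ periodicSubgroup f := fun x hx ↦
    mem_periodicPts_of_injOn hT.mapsTo hT.injOn hx (hfin x)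
  have hU_le : U ≤ iterateKer f := hU
  have hdisj := disjoint_periodicSubgroup_iterateKer f
  exact ⟨(le_iff_eq_of_codisjoint_of_disjoint (hTU.mono_right hU_le) hdisj.symm).mp hT_le,
    (le_iff_eq_of_codisjoint_of_disjoint (hTU.symm.mono_right hT_le) hdisj).mp hU_le⟩

end Fitting

section FiniteIndex

variable {G : Type*} [Group G] {f : G →* G} {N : Subgroup G} [N.FiniteIndex]

theorem comap_eq_of_surjective_of_le_comap (hf : Function.Surjective f) (hN : N ≤ N.comap f) :
    N.comap f = N :=
  (eq_of_le_of_not_lt hN fun hlt ↦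
    (Subgroup.index_strictAnti hlt).ne (N.index_comap_of_surjective hf)).symm

theorem iterateKer_le_of_surjective_of_le_comap (hf : Function.Surjective f)
    (hN : N ≤ N.comap f) : iterateKer f ≤ N := by
  rintro x ⟨n, hx⟩
  induction n generalizing x with
  | zero => exact (show x = 1 from hx) ▸ N.one_mem
  | succ n ih =>
    rw [← comap_eq_of_surjective_of_le_comap hf hN]
    exact ih hx

end FiniteIndex

section PowerMap

variable {G H : Type*} [CommGroup G] [CommGroup H]

theorem range_powMonoidHom_le_comap (f : G →* G) (n : ℕ) :
    (powMonoidHom n : G →* G).range ≤ (powMonoidHom n : G →* G).range.comap f := by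
  rintro _ ⟨x, rfl⟩
  exact ⟨f x, (map_pow f x n).symm⟩

theorem exists_mem_pow_eq_of_isCompl {T U : Subgroup G} (h : IsCompl T U) {n : ℕ} {x : G}
    (hxU : x ∈ U) (hx : x ∈ (powMonoidHom n : G →* G).range) : ∃ u ∈ U, u ^ n = x := by
  obtain ⟨y, rfl⟩ := hx
  obtain ⟨t, ht, u, hu, rfl⟩ := Subgroup.mem_sup.mp (h.sup_eq_top.ge (Subgroup.mem_top y))
  rw [powMonoidHom_apply, mul_pow] at hxU ⊢
  have ht_pow : t ^ n = 1 := Subgroup.disjoint_def.mp h.disjoint (T.pow_mem ht n)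
    ((U.mul_mem_cancel_right (U.pow_mem hu n)).mp hxU)
  exact ⟨u, hu, by rw [ht_pow, one_mul]⟩

theorem surjective_pow_iterateKer {f : G →* G} (hf : Function.Surjective f)
    (hfin : ∀ x, (Set.range (f^[·] x)).Finite) (n : ℕ)
    [(powMonoidHom n : G →* G).range.FiniteIndex] :
    Function.Surjective fun u : iterateKer f ↦ u ^ n := by
  rintro ⟨x, hx⟩
  have hx_range : x ∈ (powMonoidHom n : G →* G).range :=
    iterateKer_le_of_surjective_of_le_comap hf (range_powMonoidHom_le_comap f n) hx
  obtain ⟨u, hu, hux⟩ :=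
    exists_mem_pow_eq_of_isCompl (isCompl_periodicSubgroup_iterateKer hfin) hx hx_range
  exact ⟨⟨u, hu⟩, Subtype.ext hux⟩

theorem finite_range_iterate_of_pow_eq_one (f : G →* G) {n : ℕ}
    [Finite (powMonoidHom n : G →* G).ker] {x : G} (hx : x ^ n = 1) :
    (Set.range (f^[·] x)).Finite := by
  refine (Set.toFinite ((powMonoidHom n : G →* G).ker : Set G)).subset ?_
  rintro _ ⟨k, rfl⟩
  change (f^[k] x) ^ n = 1
  rw [← iterate_map_pow, hx, iterate_map_one]

theorem finite_ker_powMonoidHom_of_injective {f : G →* H} (hf : Function.Injective f) (n : ℕ)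
    [Finite (powMonoidHom n : H →* H).ker] : Finite (powMonoidHom n : G →* G).ker := by
  refine Finite.of_injective
    (fun x ↦ (⟨f x, ?_⟩ : (powMonoidHom n : H →* H).ker)) fun x y hxy ↦ ?_
  · rw [MonoidHom.mem_ker, powMonoidHom_apply, ← map_pow, show (x : G) ^ n = 1 from x.2, map_one]
  · exact Subtype.ext (hf (congrArg Subtype.val hxy))

theorem finite_ker_powMonoidHom_of_finiteIndex (N : Subgroup G) [N.FiniteIndex] (n : ℕ)
    [Finite (powMonoidHom n : N →* N).ker] : Finite (powMonoidHom n : G →* G).ker := by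
  refine (Subgroup.finite_iff_finite_and_finiteIndex
    (N.subgroupOf (powMonoidHom n : G →* G).ker)).mpr ⟨?_, inferInstance⟩
  refine Finite.of_injective
    (fun x ↦ (⟨⟨x, x.2⟩, ?_⟩ : (powMonoidHom n : N →* N).ker)) fun x y hxy ↦ ?_
  · exact Subtype.ext x.1.2
  · exact Subtype.ext (Subtype.ext (congrArg (fun z : (powMonoidHom n : N →* N).ker ↦ z.1.1) hxy))

instance finite_ker_powMonoidHom_pi {ι : Type*} [Finite ι] (n : ℕ)
    [Finite (powMonoidHom n : G →* G).ker] :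
    Finite (powMonoidHom n : (ι → G) →* (ι → G)).ker :=
  Finite.of_injective
    (fun x i ↦ (⟨x.1 i, congrFun x.2 i⟩ : (powMonoidHom n : G →* G).ker))
    fun _ _ hxy ↦ Subtype.ext (funext fun i ↦ congrArg Subtype.val (congrFun hxy i))

end PowerMap

section PGroup

variable {p : ℕ}

theorem isPGroup_pi {ι : Type*} [Finite ι] {G : ι → Type*} [∀ i, Group (G i)]
    (hG : ∀ i, IsPGroup p (G i)) : IsPGroup p (∀ i, G i) := by
  intro x
  have := Fintype.ofFinite ι
  choose k hk using fun i ↦ hG i (x i)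
  refine ⟨Finset.univ.sup k, funext fun i ↦ ?_⟩
  obtain ⟨d, hd⟩ := pow_dvd_pow p (Finset.le_sup (f := k) (Finset.mem_univ i))
  rw [Pi.pow_apply, hd, pow_mul, hk, one_pow, Pi.one_apply]

theorem injective_of_isPGroup {G H : Type*} [Group G] [Group H] (hG : IsPGroup p G) {f : G →* H}
    (hf : ∀ x, x ^ p = 1 → f x = 1 → x = 1) : Function.Injective f := by
  refine (injective_iff_map_eq_one f).mpr fun x hx ↦ ?_
  obtain ⟨k, hk⟩ := hG x
  induction k generalizing x with
  | zero => simpa only [pow_zero, pow_one] using hk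
  | succ k ih =>
    refine hf x (ih (x ^ p) (by rw [map_pow, hx, one_pow]) ?_) hx
    rwa [← pow_mul, ← pow_succ']

theorem surjective_of_isPGroup {G H : Type*} [Group G] [CommGroup H] (hH : IsPGroup p H)
    (hG : Function.Surjective fun x : G ↦ x ^ p) {f : G →* H}
    (hf : ∀ y, y ^ p = 1 → y ∈ f.range) : Function.Surjective f := by
  refine fun y ↦ MonoidHom.mem_range.mp ?_
  obtain ⟨k, hk⟩ := hH y
  induction k generalizing y with
  | zero => exact hf y (by rw [← pow_one y, ← pow_zero p, hk, one_pow])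
  | succ k ih =>
    obtain ⟨a, ha⟩ := ih (y ^ p) (by rwa [← pow_mul, ← pow_succ'])
    obtain ⟨b, rfl⟩ := hG a
    have hquot : y / f b ∈ f.range :=
      hf _ (by rw [div_pow, ← map_pow, ha, div_self'])
    simpa only [div_mul_cancel] using mul_mem hquot ⟨b, rfl⟩

theorem exists_addEquiv_pi_zmod_of_nsmul_eq_zero [Fact p.Prime] {V : Type*} [AddCommGroup V]
    [Finite V] (hV : ∀ x : V, p • x = 0) : ∃ r : ℕ, Nonempty (V ≃+ (Fin r → ZMod p)) := by
  obtain ⟨_⟩ : Nonempty (Module (ZMod p) V) := ⟨AddCommGroup.zmodModule hV⟩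
  exact ⟨_, ⟨(Module.finBasis (ZMod p) V).equivFun.toAddEquiv⟩⟩

theorem exists_mulEquiv_pi_of_pow_eq_one [Fact p.Prime] {V C : Type*} [CommGroup V] [Finite V]
    [Group C] (hV : ∀ x : V, x ^ p = 1) (hC : Nat.card C = p) :
    ∃ r : ℕ, Nonempty (V ≃* (Fin r → C)) := by
  obtain ⟨r, ⟨b⟩⟩ := exists_addEquiv_pi_zmod_of_nsmul_eq_zero (V := Additive V) hV
  have e : Multiplicative (ZMod p) ≃* C :=
    mulEquivOfPrimeCardEq (by rw [Nat.card_congr Multiplicative.toAdd, Nat.card_zmod]) hC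
  exact ⟨r, ⟨(AddEquiv.toMultiplicative b).trans (MulEquiv.piCongrRight fun _ ↦ e)⟩⟩

end PGroup

theorem card_ker_nsmulAddMonoidHom_addCircle {𝕜 : Type*} [Field 𝕜] [LinearOrder 𝕜]
    [IsStrictOrderedRing 𝕜] {a : 𝕜} [Fact (0 < a)] {n : ℕ} (hn : 0 < n) :
    Nat.card (nsmulAddMonoidHom n : AddCircle a →+ AddCircle a).ker = n := by
  have hker : (nsmulAddMonoidHom n : AddCircle a →+ AddCircle a).ker =
      AddSubgroup.zmultiples ((a / n : 𝕜) : AddCircle a) := by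
    refine le_antisymm (fun u hu ↦ ?_) (AddSubgroup.zmultiples_le_of_mem ?_)
    · obtain ⟨m, -, rfl⟩ := (AddCircle.nsmul_eq_zero_iff hn).mp hu
      rw [AddCircle.natCast_div_mul_eq_nsmul]
      exact AddSubgroup.nsmul_mem_zmultiples _ m
    · change n • ((a / n : 𝕜) : AddCircle a) = 0
      rw [← addOrderOf_dvd_iff_nsmul_eq_zero, AddCircle.addOrderOf_period_div hn]
  rw [hker, Nat.card_zmultiples, AddCircle.addOrderOf_period_div hn]

namespace Prufer

variable (p : ℕ) [Fact p.Prime]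

/-- The inclusion of the Prüfer group in `ℚ/ℤ`, through which it inherits divisibility and, for
`p`-groups, the extension property of an injective group. -/
def incl : Prufer p →* Multiplicative QmodZ :=
  AddMonoidHom.toMultiplicative (AddCommGroup.primaryComponent QmodZ p).subtype

theorem incl_injective : Function.Injective (incl p) :=
  Subtype.val_injective

variable {p}

theorem mem_range_incl {x : Multiplicative QmodZ} :
    x ∈ (incl p).range ↔ ∃ k : ℕ, x ^ p ^ k = 1 :=
  ⟨by rintro ⟨y, rfl⟩; exact y.2, fun hx ↦ ⟨⟨x, hx⟩, rfl⟩⟩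

variable (p)

theorem isPGroup : IsPGroup p (Prufer p) := fun x ↦ by
  obtain ⟨k, hk⟩ := mem_range_incl.mp ⟨x, rfl⟩
  exact ⟨k, incl_injective p (by rw [map_pow, hk, map_one])⟩

theorem surjective_pow : Function.Surjective fun x : Prufer p ↦ x ^ p := by
  intro x
  obtain ⟨k, hk⟩ := mem_range_incl.mp ⟨x, rfl⟩
  obtain ⟨y, hy⟩ : ∃ y : Multiplicative QmodZ, y ^ p = incl p x :=
    ⟨.ofAdd (DivisibleBy.div (incl p x).toAdd (p : ℤ)), by
      rw [← ofAdd_nsmul, ← natCast_zsmul, DivisibleBy.div_cancel _ (mod_cast NeZero.ne p),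
        ofAdd_toAdd]⟩
  obtain ⟨z, rfl⟩ := mem_range_incl.mpr ⟨k + 1, by rw [pow_succ', pow_mul, hy, hk]⟩
  exact ⟨z, incl_injective p (by rw [map_pow, hy])⟩

instance finite_ker_powMonoidHom (n : ℕ) [NeZero n] :
    Finite (powMonoidHom n : Prufer p →* Prufer p).ker := by
  have : Finite (powMonoidHom n : Multiplicative QmodZ →* Multiplicative QmodZ).ker := by
    refine Nat.finite_of_card_ne_zero (ne_of_eq_of_ne ?_ (NeZero.ne n))
    exact card_ker_nsmulAddMonoidHom_addCircle (a := (1 : ℚ)) (NeZero.pos n)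
  exact finite_ker_powMonoidHom_of_injective (incl_injective p) n

theorem card_ker_powMonoidHom : Nat.card (powMonoidHom p : Prufer p →* Prufer p).ker = p := by
  have hmap : (powMonoidHom p : Prufer p →* Prufer p).ker.map (incl p) =
      (powMonoidHom p : Multiplicative QmodZ →* Multiplicative QmodZ).ker := by
    refine le_antisymm (Subgroup.map_le_iff_le_comap.mpr fun x hx ↦ ?_) fun x hx ↦ ?_
    · exact congrArg (incl p) hx
    · obtain ⟨y, rfl⟩ := mem_range_incl.mpr ⟨1, by rwa [pow_one]⟩
      exact ⟨y, incl_injective p hx, rfl⟩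
  rw [← Subgroup.card_map_of_injective (incl_injective p), hmap]
  exact card_ker_nsmulAddMonoidHom_addCircle (a := (1 : ℚ)) (NeZero.pos p)

variable {p}

theorem exists_comp_eq_of_injective {A B : Type*} [CommGroup A] [CommGroup B] (hA : IsPGroup p A)
    {i : B →* A} (hi : Function.Injective i) (φ : B →* Prufer p) :
    ∃ ψ : A →* Prufer p, ψ.comp i = φ := by
  obtain ⟨g, hg⟩ := (Module.Baer.of_divisible (AddCircle (1 : ℚ))).extension_property_addMonoidHom
    i.toAdditive hi (MonoidHom.toAdditiveLeft ((incl p).comp φ))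
  let χ : A →* Multiplicative QmodZ := AddMonoidHom.toMultiplicativeRight g
  have hχ_comp (b : B) : χ (i b) = incl p (φ b) :=
    congrArg Multiplicative.ofAdd (DFunLike.congr_fun hg (Additive.ofMul b))
  have hχ_mem (x : A) : χ x ∈ (incl p).range :=
    mem_range_incl.mpr ((hA x).imp fun k hk ↦ by rw [← map_pow, hk, map_one])
  refine ⟨(MonoidHom.ofInjective (incl_injective p)).symm.toMonoidHom.comp
    (χ.codRestrict (incl p).range hχ_mem), MonoidHom.ext fun b ↦ incl_injective p ?_⟩
  exact (MonoidHom.apply_ofInjective_symm (incl_injective p) _).trans (hχ_comp b)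

end Prufer

theorem exists_mulEquiv_pi_prufer {p : ℕ} [Fact p.Prime] {A : Type*} [CommGroup A]
    (hA : IsPGroup p A) (hdiv : Function.Surjective fun x : A ↦ x ^ p)
    [Finite (powMonoidHom p : A →* A).ker] : ∃ r : ℕ, Nonempty (A ≃* (Fin r → Prufer p)) := by
  obtain ⟨r, ⟨e⟩⟩ := exists_mulEquiv_pi_of_pow_eq_one
    (V := (powMonoidHom p : A →* A).ker) (fun x ↦ Subtype.ext x.2) (Prufer.card_ker_powMonoidHom p)
  choose ψ hψ using fun i ↦ Prufer.exists_comp_eq_of_injective hA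
    (powMonoidHom p : A →* A).ker.subtype_injective
    ((Subgroup.subtype _).comp ((Pi.evalMonoidHom _ i).comp e.toMonoidHom))
  have hψ_apply (x : (powMonoidHom p : A →* A).ker) : MonoidHom.pi ψ x = fun i ↦ (e x i).1 :=
    funext fun i ↦ DFunLike.congr_fun (hψ i) x
  refine ⟨r, ⟨MulEquiv.ofBijective (MonoidHom.pi ψ) ⟨?_, ?_⟩⟩⟩
  · refine injective_of_isPGroup hA fun x hx hx_ker ↦ ?_
    have he : e ⟨x, hx⟩ = 1 :=
      funext fun i ↦ Subtype.ext (congrFun ((hψ_apply ⟨x, hx⟩).symm.trans hx_ker) i)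
    exact congrArg Subtype.val ((map_eq_one_iff e e.injective).mp he)
  · refine surjective_of_isPGroup (isPGroup_pi fun _ ↦ Prufer.isPGroup p) hdiv fun y hy ↦ ?_
    refine ⟨e.symm fun i ↦ ⟨y i, congrFun hy i⟩, ?_⟩
    rw [hψ_apply, e.apply_symm_apply]

namespace IsDiscretePToral

variable {p : ℕ} [Fact p.Prime]

theorem isPGroup {S : Type*} [Group S] (hS : IsDiscretePToral p S) : IsPGroup p S := by
  obtain ⟨S₀, _, ⟨r, ⟨e⟩⟩, -, hquot⟩ := hS
  have hS₀ : IsPGroup p S₀ := (isPGroup_pi fun _ ↦ Prufer.isPGroup p).of_equiv e.symm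
  intro x
  obtain ⟨k, hk⟩ := hquot x
  obtain ⟨l, hl⟩ := hS₀ ⟨x ^ p ^ k, (QuotientGroup.eq_one_iff _).mp hk⟩
  exact ⟨k + l, by rw [pow_add, pow_mul]; exact congrArg Subtype.val hl⟩

variable {S : Type*} [CommGroup S]

theorem finite_ker_powMonoidHom (hS : IsDiscretePToral p S) (n : ℕ) [NeZero n] :
    Finite (powMonoidHom n : S →* S).ker := by
  obtain ⟨S₀, _, ⟨r, ⟨e⟩⟩, _, -⟩ := hS
  have : S₀.FiniteIndex := Subgroup.finiteIndex_of_finite_quotient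
  have := finite_ker_powMonoidHom_of_injective (f := e.toMonoidHom) e.injective n
  exact finite_ker_powMonoidHom_of_finiteIndex S₀ n

theorem finiteIndex_range_powMonoidHom (hS : IsDiscretePToral p S) :
    (powMonoidHom p : S →* S).range.FiniteIndex := by
  obtain ⟨S₀, _, ⟨r, ⟨e⟩⟩, _, -⟩ := hS
  have : S₀.FiniteIndex := Subgroup.finiteIndex_of_finite_quotient
  refine Subgroup.finiteIndex_of_le (H := S₀) fun x hx ↦ ?_
  choose y hy using fun i ↦ Prufer.surjective_pow p (e ⟨x, hx⟩ i)
  have hy_pow : e.symm y ^ p = ⟨x, hx⟩ := by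
    rw [← map_pow, MulEquiv.symm_apply_eq]
    exact funext hy
  exact ⟨e.symm y, congrArg Subtype.val hy_pow⟩

theorem finite_range_iterate (hS : IsDiscretePToral p S) (f : S →* S) (x : S) :
    (Set.range (f^[·] x)).Finite := by
  obtain ⟨k, hk⟩ := hS.isPGroup x
  have := hS.finite_ker_powMonoidHom (p ^ k)
  exact finite_range_iterate_of_pow_eq_one f hk

theorem exists_iterateKer_mulEquiv (hS : IsDiscretePToral p S) {f : S →* S}
    (hf : Function.Surjective f) : ∃ r : ℕ, Nonempty (iterateKer f ≃* (Fin r → Prufer p)) := by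
  have := hS.finiteIndex_range_powMonoidHom
  have := hS.finite_ker_powMonoidHom p
  have := finite_ker_powMonoidHom_of_injective (iterateKer f).subtype_injective p
  exact exists_mulEquiv_pi_prufer (hS.isPGroup.to_subgroup _)
    (surjective_pow_iterateKer hf (hS.finite_range_iterate f) p)

end IsDiscretePToral

/-- Let `S` be an abelian discrete `p`-toral group and `f : S → S` a surjective
endomorphism. Then there is a unique pair of subgroups `(T, U)` with `S = T × U`,
`f` restricting to an automorphism of `T`, `U` connected, and `f` restricting to a
locally nilpotent endomorphism of `U`. -/
theorem exists_unique_decomposition_of_surjective_endomorphism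
    (p : ℕ) [Fact p.Prime] (S : Type*) [CommGroup S]
    (hS : IsDiscretePToral p S) (f : S →* S) (hf : Function.Surjective f) :
    ∃! TU : Subgroup S × Subgroup S,
      TU.1 ⊓ TU.2 = ⊥ ∧ TU.1 ⊔ TU.2 = ⊤ ∧
      Set.BijOn f (TU.1 : Set S) (TU.1 : Set S) ∧
      (∃ r : ℕ, Nonempty (TU.2 ≃* (Fin r → Prufer p))) ∧
      Set.MapsTo f (TU.2 : Set S) (TU.2 : Set S) ∧
      (∀ x ∈ TU.2, ∃ n : ℕ, 1 ≤ n ∧ (⇑f)^[n] x = 1) := by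
  have hfin := hS.finite_range_iterate f
  have hcompl := isCompl_periodicSubgroup_iterateKer hfin
  refine ⟨(periodicSubgroup f, iterateKer f),
    ⟨hcompl.inf_eq_bot, hcompl.sup_eq_top, bijOn_periodicSubgroup f,
      hS.exists_iterateKer_mulEquiv hf, mapsTo_iterateKer f, ?_⟩, ?_⟩
  · rintro x ⟨n, hx⟩
    exact ⟨n + 1, Nat.le_add_left 1 n, iterate_eq_one_of_le n.le_succ hx⟩
  · rintro ⟨T, U⟩ ⟨-, hsup, hT, -, -, hU⟩
    obtain ⟨rfl, rfl⟩ := eq_periodicSubgroup_and_eq_iterateKer hfin (codisjoint_iff.mpr hsup) hT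
      fun x hx ↦ (hU x hx).imp fun _ ↦ And.right
    rfl
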